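/- (Lemma on dependence of the holomorphicity equations.) Let Ω ⊆ ℂ be open and let L : Fin 3 → Fin 3 → Fin 3 → ℝ be real constants, written Lⁱⱼₖ, satisfying Lˡⱼₖ + Lᵏⱼₗ = 0 for all j, k, l ∈ {1,2,3}. Let ψ₁, ψ₂, ψ₃ : Ω → ℂ be (real-)differentiable functions with ψ₃² = −ψ₁² − ψ₂² on Ω and ψ₃(z) ≠ 0 for all z ∈ Ω. If ψ₁ and ψ₂ satisfy the first two holomorphicity equations ∂ψᵢ/∂z̄ + Σ_{j,k=1}^{3} Lⁱⱼₖ · conj(ψⱼ) · ψₖ = 0 on Ω for i = 1, 2, then ψ₃ satisfies the third equation: ∂ψ₃/∂z̄ + Σ_{j,k=1}^{3} L³ⱼₖ · conj(ψⱼ) · ψₖ = 0 on Ω. -/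

import Mathlib

open Finset Complex

/-- The Wirtinger derivative `∂ψ/∂z̄ = (1/2)(∂ψ/∂u + i ∂ψ/∂v)` of `ψ : ℂ → ℂ` at `z`. -/
noncomputable def wirtingerBar (ψ : ℂ → ℂ) (z : ℂ) : ℂ :=
  (1 / 2 : ℂ) * (fderiv ℝ ψ z 1 + Complex.I • fderiv ℝ ψ z Complex.I)

/-!
Differentiating the quadric equation `∑ᵢ ψᵢ² = c` gives `∑ᵢ ψᵢ ∂ψᵢ/∂z̄ = 0`. For fixed `z` the
zeroth order terms are `Sᵢ = ∑ₖ Aᵢₖ ψₖ` with `Aᵢₖ = ∑ⱼ Lⁱⱼₖ conj(ψⱼ)` skew-symmetric, so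
`∑ᵢ ψᵢ Sᵢ = 0` as well. Hence the left-hand sides of the holomorphicity equations are orthogonal to
`ψ` for the complex bilinear form, and when all but one of them vanish, so does the last one
wherever its `ψᵢ` is nonzero.
-/

open Topology

section Wirtinger

variable {ι : Type*} {f g : ℂ → ℂ} {z : ℂ}

lemma wirtingerBar_congr (h : f =ᶠ[𝓝 z] g) : wirtingerBar f z = wirtingerBar g z := by
  simp only [wirtingerBar, h.fderiv_eq]

lemma wirtingerBar_const (c : ℂ) : wirtingerBar (fun _ ↦ c) z = 0 := by
  simp [wirtingerBar]

lemma wirtingerBar_fun_sum {s : Finset ι} {ψ : ι → ℂ → ℂ}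
    (hψ : ∀ i ∈ s, DifferentiableAt ℝ (ψ i) z) :
    wirtingerBar (fun w ↦ ∑ i ∈ s, ψ i w) z = ∑ i ∈ s, wirtingerBar (ψ i) z := by
  simp only [wirtingerBar, fderiv_fun_sum hψ, _root_.sum_apply, smul_sum, ← sum_add_distrib,
    mul_sum]

lemma wirtingerBar_fun_pow (hf : DifferentiableAt ℝ f z) (n : ℕ) :
    wirtingerBar (fun w ↦ f w ^ n) z = n * f z ^ (n - 1) * wirtingerBar f z := by
  simp only [wirtingerBar, fderiv_fun_pow n hf, smul_apply, smul_eq_mul, nsmul_eq_mul]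
  ring

lemma sum_mul_wirtingerBar_eq_zero_of_sum_sq_eq_const {s : Finset ι} {ψ : ι → ℂ → ℂ} {c : ℂ}
    (hψ : ∀ i ∈ s, DifferentiableAt ℝ (ψ i) z) (hsq : ∀ᶠ w in 𝓝 z, ∑ i ∈ s, ψ i w ^ 2 = c) :
    ∑ i ∈ s, ψ i z * wirtingerBar (ψ i) z = 0 := by
  have htwice : 2 * ∑ i ∈ s, ψ i z * wirtingerBar (ψ i) z = 0 := calc
    2 * ∑ i ∈ s, ψ i z * wirtingerBar (ψ i) z
      = ∑ i ∈ s, wirtingerBar (fun w ↦ ψ i w ^ 2) z := by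
        rw [mul_sum]
        refine sum_congr rfl fun i hi ↦ ?_
        rw [wirtingerBar_fun_pow (hψ i hi)]
        push_cast
        ring
    _ = wirtingerBar (fun w ↦ ∑ i ∈ s, ψ i w ^ 2) z :=
        (wirtingerBar_fun_sum fun i hi ↦ (hψ i hi).fun_pow 2).symm
    _ = wirtingerBar (fun _ ↦ c) z := wirtingerBar_congr hsq
    _ = 0 := wirtingerBar_const c
  exact (mul_eq_zero.mp htwice).resolve_left two_ne_zero

end Wirtinger

section Skew

open Matrix

variable {ι κ R : Type*} [Fintype ι] [Fintype κ] [CommRing R] [IsAddTorsionFree R]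

lemma dotProduct_mulVec_self_eq_zero_of_transpose_eq_neg {A : Matrix ι ι R} (hA : Aᵀ = -A)
    (v : ι → R) : v ⬝ᵥ A *ᵥ v = 0 := by
  refine self_eq_neg.mp ?_
  rw [← dotProduct_neg, ← neg_mulVec, ← hA, dotProduct_transpose_mulVec]

lemma sum_mul_sum_sum_eq_zero_of_skew {L : ι → κ → ι → R} (hL : ∀ i j k, L i j k + L k j i = 0)
    (a : ι → R) (b : κ → R) :
    ∑ i, a i * ∑ j, ∑ k, L i j k * b j * a k = 0 := by
  let A : Matrix ι ι R := .of fun i k ↦ ∑ j, L i j k * b j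
  have hA : Aᵀ = -A := by
    ext i k
    simp only [A, transpose_apply, Matrix.neg_apply, of_apply, ← sum_neg_distrib, ← neg_mul,
      eq_neg_of_add_eq_zero_left (hL k _ i)]
  have hAa (i : ι) : (A *ᵥ a) i = ∑ j, ∑ k, L i j k * b j * a k := by
    simp only [A, mulVec, dotProduct, of_apply, sum_mul]
    exact sum_comm
  simpa only [dotProduct, hAa] using dotProduct_mulVec_self_eq_zero_of_transpose_eq_neg hA a

end Skew

theorem stmt_4_general {ι κ : Type*} [Fintype ι] [Fintype κ] {L : ι → κ → ι → ℂ}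
    (hL : ∀ i j k, L i j k + L k j i = 0) {ψ : ι → ℂ → ℂ} {z c : ℂ} (b : κ → ℂ)
    (hdiff : ∀ i, DifferentiableAt ℝ (ψ i) z) (hsq : ∀ᶠ w in 𝓝 z, ∑ i, ψ i w ^ 2 = c)
    {i₀ : ι} (hne : ψ i₀ z ≠ 0)
    (heq : ∀ i ≠ i₀, wirtingerBar (ψ i) z + ∑ j, ∑ k, L i j k * b j * ψ k z = 0) :
    wirtingerBar (ψ i₀) z + ∑ j, ∑ k, L i₀ j k * b j * ψ k z = 0 := by
  have horth : ∑ i, ψ i z * (wirtingerBar (ψ i) z + ∑ j, ∑ k, L i j k * b j * ψ k z) = 0 := by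
    simp only [mul_add, sum_add_distrib,
      sum_mul_wirtingerBar_eq_zero_of_sum_sq_eq_const (fun i _ ↦ hdiff i) hsq,
      sum_mul_sum_sum_eq_zero_of_skew hL (ψ · z) b, add_zero]
  rw [Fintype.sum_eq_single i₀ fun i hi ↦ by rw [heq i hi, mul_zero]] at horth
  exact (mul_eq_zero.mp horth).resolve_left hne

/-- Lemma on dependence of the holomorphicity equations: if `Lˡⱼₖ + Lᵏⱼₗ = 0`, the functions
`ψ₁, ψ₂, ψ₃` are real-differentiable on an open `Ω` with `ψ₃² = -ψ₁² - ψ₂²` and `ψ₃ ≠ 0` on `Ω`,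
and `ψ₁, ψ₂` satisfy the first two holomorphicity equations, then `ψ₃` satisfies the third:
`∂ψ₃/∂z̄ + Σ_{j,k} L³ⱼₖ conj(ψⱼ) ψₖ = 0` on `Ω`. -/
theorem stmt_4 (Ω : Set ℂ) (hΩ : IsOpen Ω) (L : Fin 3 → Fin 3 → Fin 3 → ℝ)
    (hL : ∀ j k l : Fin 3, L l j k + L k j l = 0)
    (ψ : Fin 3 → ℂ → ℂ)
    (hdiff : ∀ i : Fin 3, ∀ z ∈ Ω, DifferentiableAt ℝ (ψ i) z)
    (hsq : ∀ z ∈ Ω, (ψ 2 z) ^ 2 = -(ψ 0 z) ^ 2 - (ψ 1 z) ^ 2)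
    (hne : ∀ z ∈ Ω, ψ 2 z ≠ 0)
    (heq0 : ∀ z ∈ Ω, wirtingerBar (ψ 0) z
      + ∑ j : Fin 3, ∑ k : Fin 3, (L 0 j k : ℂ) * (starRingEnd ℂ) (ψ j z) * ψ k z = 0)
    (heq1 : ∀ z ∈ Ω, wirtingerBar (ψ 1) z
      + ∑ j : Fin 3, ∑ k : Fin 3, (L 1 j k : ℂ) * (starRingEnd ℂ) (ψ j z) * ψ k z = 0) :
    ∀ z ∈ Ω, wirtingerBar (ψ 2) z
      + ∑ j : Fin 3, ∑ k : Fin 3, (L 2 j k : ℂ) * (starRingEnd ℂ) (ψ j z) * ψ k z = 0 := by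
  intro z hz
  have hquadric : ∀ᶠ w in 𝓝 z, ∑ i, ψ i w ^ 2 = 0 := (hΩ.eventually_mem hz).mono fun w hw ↦ by
    rw [Fin.sum_univ_three, hsq w hw]
    ring
  refine stmt_4_general (L := fun i j k ↦ (L i j k : ℂ)) (fun i j k ↦ mod_cast hL j k i)
    (fun j ↦ (starRingEnd ℂ) (ψ j z)) (hdiff · z hz) hquadric (hne z hz)
    fun i hi ↦ ?_
  fin_cases i
  exacts [heq0 z hz, heq1 z hz, absurd rfl hi]
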